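/- arXiv:2307.06210 — 8 statements merged into one kernel-verified Lean document; each statement's English description precedes it below -/
import Mathlib

section
/- Let (x*, y*, μ*, z*) be an optimal solution to LP(P, C, 0), the linear program instantiated with the true distributions ζ_b = P(·,·|b), the true cost differences Λ_i = C_i, and ε = 0. Define γ*_i[b,s,θ] = x*_i[b,s,θ]/μ*[b] if μ*[b] ≠ 0 and γ*_i[b,s,θ] = 0 otherwise, and π*[b,s,a] = y*[b,s,a]/μ*[b] if μ*[b] ≠ 0 and π*[b,s,a] = 1/d otherwise. Then (μ*, γ*, π*) is an incentive compatible correlated mechanism and U(μ*,γ*,π*) ≥ U(μ,γ,π) for every incentive compatible correlated mechanism (μ,γ,π). -/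
open Finset

noncomputable section

variable {n : ℕ} {B S : Fin n → Type*} {Θ A : Type*}

/-- Expected payment of agent `i` under truthful behavior. -/
def Fpay [∀ i, Fintype (B i)] [∀ i, Fintype (S i)] [Fintype Θ]
    (P : (∀ i, B i) → (∀ i, S i) → Θ → ℝ) (μ : (∀ i, B i) → ℝ)
    (γ : Fin n → (∀ i, B i) → (∀ i, S i) → Θ → ℝ) (i : Fin n) : ℝ :=
  ∑ b, ∑ s, ∑ θ, μ b * P b s θ * γ i b s θ

/-- Expected payment of agent `i` deviating via `(φ, ψ)` while the others are truthful. -/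
def FpayDev [∀ i, Fintype (B i)] [∀ i, Fintype (S i)] [Fintype Θ]
    (P : (∀ i, B i) → (∀ i, S i) → Θ → ℝ) (μ : (∀ i, B i) → ℝ)
    (γ : Fin n → (∀ i, B i) → (∀ i, S i) → Θ → ℝ) (i : Fin n)
    (φ : B i → B i) (ψ : B i → S i → S i) : ℝ :=
  ∑ b, ∑ s, ∑ θ, μ b * P (Function.update b i (φ (b i))) s θ *
      γ i b (Function.update s i (ψ (b i) (s i))) θ

/-- Incentive compatibility of a correlated mechanism. -/
def IC [∀ i, Fintype (B i)] [∀ i, Fintype (S i)] [Fintype Θ]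
    (c : ∀ i, B i → ℝ) (P : (∀ i, B i) → (∀ i, S i) → Θ → ℝ)
    (μ : (∀ i, B i) → ℝ)
    (γ : Fin n → (∀ i, B i) → (∀ i, S i) → Θ → ℝ) : Prop :=
  ∀ (i : Fin n) (φ : B i → B i) (ψ : B i → S i → S i),
    Fpay P μ γ i - FpayDev P μ γ i φ ψ ≥ ∑ b, μ b * (c i (b i) - c i (φ (b i)))

/-- Principal's expected utility of a correlated mechanism. -/
def Util [∀ i, Fintype (B i)] [∀ i, Fintype (S i)] [Fintype Θ] [Fintype A]
    (P : (∀ i, B i) → (∀ i, S i) → Θ → ℝ) (u : A → Θ → ℝ)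
    (μ : (∀ i, B i) → ℝ)
    (γ : Fin n → (∀ i, B i) → (∀ i, S i) → Θ → ℝ)
    (π : (∀ i, B i) → (∀ i, S i) → A → ℝ) : ℝ :=
  (∑ b, ∑ s, ∑ θ, μ b * P b s θ * ∑ a, π b s a * u a θ) - ∑ i, Fpay P μ γ i

/-- Validity of a correlated mechanism (distributions and payment bounds). -/
def IsMech [∀ i, Fintype (B i)] [Fintype A] (M : ℝ)
    (μ : (∀ i, B i) → ℝ)
    (γ : Fin n → (∀ i, B i) → (∀ i, S i) → Θ → ℝ)
    (π : (∀ i, B i) → (∀ i, S i) → A → ℝ) : Prop :=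
  (∀ b, 0 ≤ μ b) ∧ (∑ b, μ b) = 1 ∧
  (∀ i b s θ, γ i b s θ ∈ Set.Icc (0:ℝ) M) ∧
  (∀ b s a, 0 ≤ π b s a) ∧ (∀ b s, ∑ a, π b s a = 1)

/-- `f_i(x_i | b_i, b'_i, s_i, s'_i, ζ)`. -/
def fLP [∀ i, Fintype (B i)] [∀ i, DecidableEq (B i)]
    [∀ i, Fintype (S i)] [∀ i, DecidableEq (S i)] [Fintype Θ]
    (i : Fin n) (x : (∀ j, B j) → (∀ j, S j) → Θ → ℝ)
    (bi bi' : B i) (si si' : S i)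
    (ζ : (∀ j, B j) → (∀ j, S j) → Θ → ℝ) : ℝ :=
  ∑ b, ∑ s, ∑ θ,
    if b i = bi' ∧ s i = si then
      x (Function.update b i bi) (Function.update s i si') θ * ζ b s θ
    else 0

/-- Feasibility for `LP(ζ, Λ, ε)`. -/
def LPfeasible [∀ i, Fintype (B i)] [∀ i, DecidableEq (B i)]
    [∀ i, Fintype (S i)] [∀ i, DecidableEq (S i)] [Fintype Θ] [Fintype A]
    (M : ℝ)
    (ζ : (∀ j, B j) → (∀ j, S j) → Θ → ℝ)
    (Λ : ∀ i, B i → B i → ℝ) (ε : ℝ)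
    (x : Fin n → (∀ j, B j) → (∀ j, S j) → Θ → ℝ)
    (y : (∀ j, B j) → (∀ j, S j) → A → ℝ)
    (z : ∀ i, B i → B i → S i → ℝ)
    (μ : (∀ j, B j) → ℝ) : Prop :=
  (∀ i b s θ, 0 ≤ x i b s θ) ∧
  (∀ b s a, 0 ≤ y b s a) ∧
  (∀ i (bi bi' : B i) si, 0 ≤ z i bi bi' si) ∧
  (∀ b, 0 ≤ μ b) ∧ (∑ b, μ b) = 1 ∧
  (∀ (i : Fin n) (bi bi' : B i),
    (∑ si, (fLP i (x i) bi bi si si ζ - z i bi bi' si)) ≥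
      (∑ b, if b i = bi then μ b * Λ i bi bi' else 0) - ε) ∧
  (∀ (i : Fin n) (bi bi' : B i) (si si' : S i),
    z i bi bi' si ≥ fLP i (x i) bi bi' si si' ζ) ∧
  (∀ b s, (∑ a, y b s a) = μ b) ∧
  (∀ i b s θ, x i b s θ ≤ M * μ b)

/-- Objective of `LP(ζ, Λ, ε)`. -/
def LPobj [∀ i, Fintype (B i)] [∀ i, Fintype (S i)] [Fintype Θ] [Fintype A]
    (u : A → Θ → ℝ)
    (ζ : (∀ j, B j) → (∀ j, S j) → Θ → ℝ)
    (x : Fin n → (∀ j, B j) → (∀ j, S j) → Θ → ℝ)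
    (y : (∀ j, B j) → (∀ j, S j) → A → ℝ) : ℝ :=
  ∑ b, ∑ s, ∑ θ,
    ((∑ a, y b s a * ζ b s θ * u a θ) - ∑ i, x i b s θ * ζ b s θ)

/-- Deviation payoff of the type `bi` playing `bi'` and reporting through `g`. -/
def DevD [∀ i, Fintype (B i)] [∀ i, DecidableEq (B i)]
    [∀ i, Fintype (S i)] [Fintype Θ]
    (P : (∀ i, B i) → (∀ i, S i) → Θ → ℝ)
    (i : Fin n) (x : (∀ j, B j) → (∀ j, S j) → Θ → ℝ)
    (bi bi' : B i) (g : S i → S i) : ℝ :=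
  ∑ b, if b i = bi then
    ∑ s, ∑ θ, x b (Function.update s i (g (s i))) θ * P (Function.update b i bi') s θ else 0

theorem sum_swap_update [∀ i, Fintype (B i)] [∀ i, DecidableEq (B i)]
    (i : Fin n) (bi bi' : B i) (g : (∀ j, B j) → (∀ j, B j) → ℝ) :
    (∑ b, if b i = bi' then g b (Function.update b i bi) else 0) =
      ∑ b, if b i = bi then g (Function.update b i bi') b else 0 := by
  rw [← Finset.sum_filter, ← Finset.sum_filter]
  refine Finset.sum_nbij' (fun b => Function.update b i bi) (fun b => Function.update b i bi')
    ?_ ?_ ?_ ?_ ?_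
  · intro b hb; simp
  · intro b hb; simp
  · intro b hb
    have : b i = bi' := by simpa using hb
    subst this; simp
  · intro b hb
    have : b i = bi := by simpa using hb
    subst this; simp
  · intro b hb
    have : b i = bi' := by simpa using hb
    subst this; simp

theorem sum_fLP [∀ i, Fintype (B i)] [∀ i, DecidableEq (B i)]
    [∀ i, Fintype (S i)] [∀ i, DecidableEq (S i)] [Fintype Θ]
    (P : (∀ i, B i) → (∀ i, S i) → Θ → ℝ)
    (i : Fin n) (x : (∀ j, B j) → (∀ j, S j) → Θ → ℝ)
    (bi bi' : B i) (g : S i → S i) :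
    ∑ si, fLP i x bi bi' si (g si) P = DevD P i x bi bi' g := by
  unfold fLP DevD
  rw [← sum_swap_update i bi bi' (fun b b' => ∑ s, ∑ θ,
    x b' (Function.update s i (g (s i))) θ * P b s θ)]
  rw [Finset.sum_comm]
  refine Finset.sum_congr rfl fun b _ => ?_
  rw [Finset.sum_comm]
  by_cases h : b i = bi'
  · simp only [h, true_and, if_true]
    refine Finset.sum_congr rfl fun s _ => ?_
    rw [Finset.sum_comm]
    refine Finset.sum_congr rfl fun θ _ => ?_
    simp
  · simp [h]

theorem FpayDev_eq [∀ i, Fintype (B i)] [∀ i, DecidableEq (B i)]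
    [∀ i, Fintype (S i)] [Fintype Θ]
    (P : (∀ i, B i) → (∀ i, S i) → Θ → ℝ) (μ : (∀ i, B i) → ℝ)
    (γ : Fin n → (∀ i, B i) → (∀ i, S i) → Θ → ℝ) (i : Fin n)
    (φ : B i → B i) (ψ : B i → S i → S i) :
    FpayDev P μ γ i φ ψ =
      ∑ bi, DevD P i (fun b s θ => μ b * γ i b s θ) bi (φ bi) (ψ bi) := by
  unfold FpayDev DevD
  symm
  rw [Finset.sum_comm]
  refine Finset.sum_congr rfl fun b _ => ?_
  rw [Finset.sum_ite_eq]
  simp only [Finset.mem_univ, if_true]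
  refine Finset.sum_congr rfl fun s _ => Finset.sum_congr rfl fun θ _ => ?_
  ring

theorem Fpay_eq [∀ i, Fintype (B i)] [∀ i, DecidableEq (B i)]
    [∀ i, Fintype (S i)] [Fintype Θ]
    (P : (∀ i, B i) → (∀ i, S i) → Θ → ℝ) (μ : (∀ i, B i) → ℝ)
    (γ : Fin n → (∀ i, B i) → (∀ i, S i) → Θ → ℝ) (i : Fin n) :
    Fpay P μ γ i =
      ∑ bi, DevD P i (fun b s θ => μ b * γ i b s θ) bi bi (fun si => si) := by
  rw [← FpayDev_eq P μ γ i (fun bi => bi) (fun _ si => si)]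
  unfold Fpay FpayDev
  simp

theorem cost_eq [∀ i, Fintype (B i)] [∀ i, DecidableEq (B i)]
    (c : ∀ i, B i → ℝ) (μ : (∀ i, B i) → ℝ) (i : Fin n) (φ : B i → B i) :
    ∑ b, μ b * (c i (b i) - c i (φ (b i))) =
      ∑ bi, ∑ b, if b i = bi then μ b * (c i bi - c i (φ bi)) else 0 := by
  rw [Finset.sum_comm]
  refine Finset.sum_congr rfl fun b _ => ?_
  simp

theorem LPobj_eq [∀ i, Fintype (B i)] [∀ i, Fintype (S i)] [Fintype Θ] [Fintype A]
    (P : (∀ i, B i) → (∀ i, S i) → Θ → ℝ) (u : A → Θ → ℝ)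
    (μ : (∀ i, B i) → ℝ)
    (γ : Fin n → (∀ i, B i) → (∀ i, S i) → Θ → ℝ)
    (π : (∀ i, B i) → (∀ i, S i) → A → ℝ) :
    LPobj u P (fun i b s θ => μ b * γ i b s θ) (fun b s a => μ b * π b s a) =
      Util P u μ γ π := by
  unfold LPobj Util Fpay
  simp only [Finset.sum_sub_distrib]
  congr 1
  · refine Finset.sum_congr rfl fun b _ => Finset.sum_congr rfl fun s _ =>
      Finset.sum_congr rfl fun θ _ => ?_
    rw [Finset.mul_sum]
    refine Finset.sum_congr rfl fun a _ => ?_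
    ring
  · symm
    rw [Finset.sum_comm]
    refine Finset.sum_congr rfl fun b _ => ?_
    rw [Finset.sum_comm]
    refine Finset.sum_congr rfl fun s _ => ?_
    rw [Finset.sum_comm]
    refine Finset.sum_congr rfl fun θ _ => Finset.sum_congr rfl fun i _ => ?_
    ring

theorem feasible_of_mech
    [∀ i, Fintype (B i)] [∀ i, DecidableEq (B i)]
    [∀ i, Fintype (S i)] [∀ i, DecidableEq (S i)]
    [Fintype Θ] [Fintype A] (c : ∀ i, B i → ℝ)
    (P : (∀ i, B i) → (∀ i, S i) → Θ → ℝ) (M : ℝ)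
    (hP0 : ∀ b s θ, 0 ≤ P b s θ)
    (μ : (∀ i, B i) → ℝ)
    (γ : Fin n → (∀ i, B i) → (∀ i, S i) → Θ → ℝ)
    (π : (∀ i, B i) → (∀ i, S i) → A → ℝ)
    (hm : IsMech M μ γ π) (hic : IC c P μ γ) :
    ∃ z, LPfeasible M P (fun i bi bi' => c i bi - c i bi') 0
      (fun i b s θ => μ b * γ i b s θ) (fun b s a => μ b * π b s a) z μ := by
  obtain ⟨h1, h2, h3, h4, h5⟩ := hm
  have hex : ∀ i (bi bi' : B i) (si : S i), ∃ t : S i, ∀ si',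
      fLP i (fun b s θ => μ b * γ i b s θ) bi bi' si si' P ≤
        fLP i (fun b s θ => μ b * γ i b s θ) bi bi' si t P := by
    intro i bi bi' si
    haveI : Nonempty (S i) := ⟨si⟩
    exact Finite.exists_max _
  choose t ht using hex
  refine ⟨fun i bi bi' si =>
    fLP i (fun b s θ => μ b * γ i b s θ) bi bi' si (t i bi bi' si) P, ?_⟩
  refine ⟨?_, ?_, ?_, h1, h2, ?_, ?_, ?_, ?_⟩
  · intro i b s θ
    exact mul_nonneg (h1 b) (h3 i b s θ).1
  · intro b s a
    exact mul_nonneg (h1 b) (h4 b s a)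
  · intro i bi bi' si
    refine Finset.sum_nonneg fun b _ => Finset.sum_nonneg fun s _ =>
      Finset.sum_nonneg fun θ _ => ?_
    split_ifs
    · exact mul_nonneg (mul_nonneg (h1 _) (h3 _ _ _ _).1) (hP0 _ _ _)
    · exact le_rfl
  · intro i bi bi'
    rw [Finset.sum_sub_distrib, sum_fLP P i _ bi bi (fun si => si),
      sum_fLP P i _ bi bi' (t i bi bi'), sub_zero]
    have h := hic i (Function.update (fun b => b) bi bi')
      (Function.update (fun _ s => s) bi (t i bi bi'))
    rw [Fpay_eq, FpayDev_eq, cost_eq, ← Finset.sum_sub_distrib] at h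
    rw [Finset.sum_eq_single bi, Finset.sum_eq_single bi] at h
    · simpa using h
    · intro b _ hb
      simp [Function.update_of_ne hb]
    · simp
    · intro b _ hb
      simp [Function.update_of_ne hb]
    · simp
  · intro i bi bi' si si'
    exact ht i bi bi' si si'
  · intro b s
    rw [← Finset.mul_sum, h5, mul_one]
  · intro i b s θ
    rw [mul_comm M]
    exact mul_le_mul_of_nonneg_left (h3 i b s θ).2 (h1 b)

/-- from an optimal solution of `LP(P, C, 0)` one recovers an optimal
incentive compatible correlated mechanism. -/
theorem optimal_mechanism_from_LP
    [∀ i, Fintype (B i)] [∀ i, DecidableEq (B i)]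
    [∀ i, Fintype (S i)] [∀ i, DecidableEq (S i)]
    [Fintype Θ] [Fintype A] [Nonempty A]
    (p : Θ → ℝ) (c : ∀ i, B i → ℝ)
    (P : (∀ i, B i) → (∀ i, S i) → Θ → ℝ)
    (u : A → Θ → ℝ) (M : ℝ) (hM : 0 < M)
    (hc : ∀ i bi, c i bi ∈ Set.Icc (0:ℝ) 1)
    (hu : ∀ a θ, u a θ ∈ Set.Icc (0:ℝ) 1)
    (hp0 : ∀ θ, 0 ≤ p θ) (hp1 : (∑ θ, p θ) = 1)
    (hP0 : ∀ b s θ, 0 ≤ P b s θ)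
    (hPp : ∀ b θ, (∑ s, P b s θ) = p θ)
    (hmarg : ∀ (i : Fin n) (b b' : ∀ j, B j), b i = b' i →
      ∀ (si : S i) (θ : Θ),
        (∑ s, if s i = si then P b s θ else 0) =
        (∑ s, if s i = si then P b' s θ else 0))
    (xs : Fin n → (∀ j, B j) → (∀ j, S j) → Θ → ℝ)
    (ys : (∀ j, B j) → (∀ j, S j) → A → ℝ)
    (zs : ∀ i, B i → B i → S i → ℝ)
    (μs : (∀ j, B j) → ℝ)
    (hfeas : LPfeasible M P (fun i bi bi' => c i bi - c i bi') 0 xs ys zs μs)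
    (hopt : ∀ x y z μ,
      LPfeasible M P (fun i bi bi' => c i bi - c i bi') 0 x y z μ →
      LPobj u P x y ≤ LPobj u P xs ys)
    (γs : Fin n → (∀ j, B j) → (∀ j, S j) → Θ → ℝ)
    (πs : (∀ j, B j) → (∀ j, S j) → A → ℝ)
    (hγ : ∀ i b s θ, γs i b s θ = if μs b = 0 then 0 else xs i b s θ / μs b)
    (hπ : ∀ b s a, πs b s a =
      if μs b = 0 then (1 : ℝ) / (Fintype.card A) else ys b s a / μs b) :
    IsMech M μs γs πs ∧ IC c P μs γs ∧
      ∀ μ γ π, IsMech M μ γ π → IC c P μ γ →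
        Util P u μ γ π ≤ Util P u μs γs πs := by
  obtain ⟨h1, h2, h3, h4, h5, h6, h7, h8, h9⟩ := hfeas
  have hx : xs = fun i b s θ => μs b * γs i b s θ := by
    funext i b s θ
    rw [hγ]
    split_ifs with h
    · have := h9 i b s θ
      rw [h, mul_zero] at this
      rw [mul_zero]
      exact le_antisymm this (h1 i b s θ)
    · field_simp
  have hy : ys = fun b s a => μs b * πs b s a := by
    funext b s a
    rw [hπ]
    split_ifs with h
    · rw [h, zero_mul]
      have h0 := h8 b s
      rw [h, Finset.sum_eq_zero_iff_of_nonneg (fun a _ => h2 b s a)] at h0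
      exact h0 a (Finset.mem_univ a)
    · field_simp
  refine ⟨⟨h4, h5, ?_, ?_, ?_⟩, ?_, ?_⟩
  · intro i b s θ
    rw [hγ]
    split_ifs with h
    · exact ⟨le_rfl, hM.le⟩
    · have hpos : 0 < μs b := lt_of_le_of_ne (h4 b) (Ne.symm h)
      exact ⟨div_nonneg (h1 i b s θ) hpos.le, (div_le_iff₀ hpos).2 (h9 i b s θ)⟩
  · intro b s a
    rw [hπ]
    split_ifs with h
    · positivity
    · exact div_nonneg (h2 b s a) (h4 b)
  · intro b s
    simp only [hπ]
    split_ifs with h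
    · simp
    · rw [← Finset.sum_div, h8, div_self h]
  · intro i φ ψ
    rw [Fpay_eq, FpayDev_eq, cost_eq, ← Finset.sum_sub_distrib]
    refine Finset.sum_le_sum fun bi _ => ?_
    have h := h6 i bi (φ bi)
    rw [Finset.sum_sub_distrib, sum_fLP P i _ bi bi (fun si => si), sub_zero] at h
    have h' : DevD P i (xs i) bi (φ bi) (ψ bi) ≤ ∑ si, zs i bi (φ bi) si := by
      rw [← sum_fLP]
      exact Finset.sum_le_sum fun si _ => h7 i bi (φ bi) si (ψ bi si)
    rw [hx] at h h'
    dsimp only at h h'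
    linarith
  · intro μ γ π hm hic
    obtain ⟨z, hz⟩ := feasible_of_mech c P M hP0 μ γ π hm hic
    have h := hopt _ _ _ _ hz
    rw [hx, hy, LPobj_eq, LPobj_eq] at h
    exact h
end
end

section
/- Let (γ, π) be an uncorrelated mechanism and, for each agent i, let (b_i, φ_i) be a best response of agent i to γ_i. Define γ'_i[s,θ] := γ_i[φ_i(s),θ] for all s ∈ S_i, θ ∈ Θ, and π'[s,a] := π[(φ_1(s_1),…,φ_n(s_n)),a] for all s ∈ S, a ∈ A. Then for each agent i the pair (b_i, identity reporting) is a best response of agent i to γ'_i, and Σ_{s,θ} P(s,θ|b)·[Σ_a π'[s,a]·u(a,θ) − Σ_i γ'_i[s_i,θ]] = Σ_{s,θ} P(s,θ|b)·[Σ_a π[(φ_1(s_1),…,φ_n(s_n)),a]·u(a,θ) − Σ_i γ_i[φ_i(s_i),θ]], where b = (b_1,…,b_n). -/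
open Finset

noncomputable section

variable {n : ℕ} {B S : Fin n → Type*} {Θ A : Type*}

/-- `(bi, φ)` is a best response of agent `i` to the uncorrelated scoring rule `γ`,
where `Pm i` is the joint distribution `P^{(i)}(s_i, θ | b_i)` of agent `i`'s signal
and the state. -/
def IsBR [∀ i, Fintype (S i)] [Fintype Θ]
    (Pm : ∀ i, B i → S i → Θ → ℝ) (c : ∀ i, B i → ℝ) (i : Fin n)
    (γ : S i → Θ → ℝ) (bi : B i) (φ : S i → S i) : Prop :=
  ∀ (bi' : B i) (φ' : S i → S i),
    (∑ s, ∑ θ, Pm i bi s θ * γ (φ s) θ) - c i bi ≥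
    (∑ s, ∑ θ, Pm i bi' s θ * γ (φ' s) θ) - c i bi'

/-- any uncorrelated mechanism can be turned into an equivalent one under
which truthful signal reporting is a best response. -/
theorem truthful_equivalent_uncorrelated_mechanism
    [∀ i, Fintype (B i)] [∀ i, DecidableEq (B i)]
    [∀ i, Fintype (S i)] [∀ i, DecidableEq (S i)]
    [Fintype Θ] [Fintype A]
    (p : Θ → ℝ) (c : ∀ i, B i → ℝ)
    (P : (∀ i, B i) → (∀ i, S i) → Θ → ℝ)
    (Pm : ∀ i, B i → S i → Θ → ℝ)
    (u : A → Θ → ℝ) (M : ℝ) (hM : 0 < M)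
    (hc : ∀ i bi, c i bi ∈ Set.Icc (0:ℝ) 1)
    (hu : ∀ a θ, u a θ ∈ Set.Icc (0:ℝ) 1)
    (hp0 : ∀ θ, 0 ≤ p θ) (hp1 : (∑ θ, p θ) = 1)
    (hP0 : ∀ b s θ, 0 ≤ P b s θ)
    (hPp : ∀ b θ, (∑ s, P b s θ) = p θ)
    (hPm : ∀ (i : Fin n) (b : ∀ j, B j) (si : S i) (θ : Θ),
      (∑ s, if s i = si then P b s θ else 0) = Pm i (b i) si θ)
    (γ : ∀ i, S i → Θ → ℝ) (π : (∀ i, S i) → A → ℝ)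
    (hγrange : ∀ i s θ, γ i s θ ∈ Set.Icc (0:ℝ) M)
    (hπ0 : ∀ s a, 0 ≤ π s a) (hπ1 : ∀ s, (∑ a, π s a) = 1)
    (b : ∀ i, B i) (φ : ∀ i, S i → S i)
    (hBR : ∀ i, IsBR Pm c i (γ i) (b i) (φ i))
    (γ2 : ∀ i, S i → Θ → ℝ) (π2 : (∀ i, S i) → A → ℝ)
    (hγ2 : ∀ i s θ, γ2 i s θ = γ i (φ i s) θ)
    (hπ2 : ∀ s a, π2 s a = π (fun j => φ j (s j)) a) :
    (∀ i, IsBR Pm c i (γ2 i) (b i) id) ∧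
    (∑ s, ∑ θ, P b s θ * ((∑ a, π2 s a * u a θ) - ∑ i, γ2 i (s i) θ)) =
      ∑ s, ∑ θ, P b s θ *
        ((∑ a, π (fun j => φ j (s j)) a * u a θ) - ∑ i, γ i (φ i (s i)) θ) := by
  refine ⟨fun i bi' φ' => ?_, ?_⟩
  · simp only [hγ2, id]
    exact hBR i bi' (fun s => φ i (φ' s))
  · simp only [hγ2, hπ2]
end
end

section
/- Let γ_i and γ'_i be uncorrelated scoring rules for agent i with ||γ_i − γ'_i||_∞ ≤ η, such that b_i is a best-response action to γ_i and b'_i is a best-response action to γ'_i (each maximizing F°_i(·|b) − c_i(b) over b ∈ B_i). Let V, V' ∈ ℝ satisfy |V − F°_i(γ_i|b_i)| ≤ ε and |V' − F°_i(γ'_i|b'_i)| ≤ ε. Then |(V − V') − C_i(b_i, b'_i)| ≤ 2ε + η. -/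
open Finset

noncomputable section

variable {Bi Si Θ : Type*}

instance nonempty_self_maps {α : Type*} : Nonempty (α → α) := ⟨id⟩

/-- `F°(γ | b)`: maximum expected payment of the agent when she plays `b` and
best-responds in signal reporting, where `P b` is the joint distribution
`P^{(i)}(·,· | b)` over signals and states. -/
def Fo [Fintype Si] [DecidableEq Si] [Fintype Θ]
    (P : Bi → Si → Θ → ℝ) (γ : Si → Θ → ℝ) (b : Bi) : ℝ :=
  Finset.univ.sup' Finset.univ_nonempty
    (fun φ : Si → Si => ∑ s, ∑ θ, P b s θ * γ (φ s) θ)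
lemma Fo_le_add [Fintype Si] [DecidableEq Si] [Fintype Θ]
    (P : Bi → Si → Θ → ℝ)
    (hP0 : ∀ b s θ, 0 ≤ P b s θ) (hP1 : ∀ b, (∑ s, ∑ θ, P b s θ) = 1)
    (γ γ' : Si → Θ → ℝ) (η : ℝ) (hη : ∀ s θ, |γ s θ - γ' s θ| ≤ η) (b : Bi) :
    Fo P γ b ≤ Fo P γ' b + η := by
  unfold Fo
  apply Finset.sup'_le
  intro φ _
  have h1 := Finset.le_sup' (fun φ : Si → Si => ∑ s, ∑ θ, P b s θ * γ' (φ s) θ)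
    (Finset.mem_univ φ)
  have h2 : ∑ s, ∑ θ, P b s θ * γ (φ s) θ
      ≤ ∑ s, ∑ θ, (P b s θ * γ' (φ s) θ + P b s θ * η) := by
    refine Finset.sum_le_sum fun s _ => Finset.sum_le_sum fun θ _ => ?_
    have h3 := (abs_le.mp (hη (φ s) θ)).2
    nlinarith [hP0 b s θ]
  simp only [Finset.sum_add_distrib, ← Finset.sum_mul, hP1, one_mul] at h2
  exact h2.trans (add_le_add_left h1 η)

/-- high-confidence estimation of the cost difference from estimated
optimal payments under two close scoring rules incentivizing `b` and `b'`. -/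
theorem cost_difference_estimate
    [Fintype Bi] [Fintype Si] [DecidableEq Si] [Fintype Θ]
    (P : Bi → Si → Θ → ℝ) (c : Bi → ℝ) (M : ℝ) (hM : 0 < M)
    (hP0 : ∀ b s θ, 0 ≤ P b s θ) (hP1 : ∀ b, (∑ s, ∑ θ, P b s θ) = 1)
    (hc : ∀ b, c b ∈ Set.Icc (0:ℝ) 1)
    (γ γ' : Si → Θ → ℝ)
    (hγ : ∀ s θ, γ s θ ∈ Set.Icc (0:ℝ) M)
    (hγ' : ∀ s θ, γ' s θ ∈ Set.Icc (0:ℝ) M)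
    (η : ℝ) (hη : ∀ s θ, |γ s θ - γ' s θ| ≤ η)
    (b b' : Bi)
    (hBR : ∀ b'', Fo P γ b - c b ≥ Fo P γ b'' - c b'')
    (hBR' : ∀ b'', Fo P γ' b' - c b' ≥ Fo P γ' b'' - c b'')
    (V V' ε : ℝ)
    (hV : |V - Fo P γ b| ≤ ε) (hV' : |V' - Fo P γ' b'| ≤ ε) :
    |(V - V') - (c b - c b')| ≤ 2 * ε + η := by
  have h1 := Fo_le_add P hP0 hP1 γ γ' η hη b
  have h2 := Fo_le_add P hP0 hP1 γ' γ η (fun s θ => by rw [abs_sub_comm]; exact hη s θ) b'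
  have h3 := hBR b'
  have h4 := hBR' b
  rw [abs_le] at *
  constructor <;> linarith [hV.1, hV.2, hV'.1, hV'.2]
end
end

section
/- Let H ⊆ ℝ be a closed convex set and let G¹, …, Gⁿ be partitions of H, where each Gⁱ = {Gⁱ_1, …, Gⁱ_n} consists of n convex sets. Let P = {P_1, …, P_m} be a partition of H such that each P_j is of the form P_j = ∩_{i∈[n]} Gⁱ_{f(i,j)} for some choice f(i,j) ∈ [n]. Then m ≤ n² − n + 1. -/
/-- if `P` is a partition of a closed convex set `H ⊆ ℝ` each of whose
parts is an intersection of one part from each of `n` partitions of `H` into `n`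
convex sets, then `P` has at most `n² − n + 1` parts. -/
theorem partition_of_intersections_card_bound
    (H : Set ℝ) (hH : IsClosed H) (hHconv : Convex ℝ H)
    (n m : ℕ)
    (G : Fin n → Fin n → Set ℝ)
    (hGconv : ∀ i j, Convex ℝ (G i j))
    (hGne : ∀ i j, (G i j).Nonempty)
    (hGdisj : ∀ i, Pairwise fun j j' => Disjoint (G i j) (G i j'))
    (hGcover : ∀ i, (⋃ j, G i j) = H)
    (P : Fin m → Set ℝ)
    (f : Fin n → Fin m → Fin n)
    (hP : ∀ j, P j = ⋂ i, G i (f i j))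
    (hPne : ∀ j, (P j).Nonempty)
    (hPdisj : Pairwise fun j j' => Disjoint (P j) (P j'))
    (hPcover : (⋃ j, P j) = H) :
    m ≤ n ^ 2 - n + 1 := by
  classical
  choose x hx using hPne
  have hxG : ∀ i j, x j ∈ G i (f i j) := by
    intro i j
    have h := hx j
    rw [hP j] at h
    exact Set.mem_iInter.1 h i
  -- if `f i` agrees at two points then it agrees at every point in between
  have hmid : ∀ i a b c, x a ≤ x b → x b ≤ x c → f i c = f i a → f i b = f i a := by
    intro i a b c hab hbc hac
    by_contra hne
    have hc := hxG i c
    rw [hac] at hc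
    have hb : x b ∈ G i (f i a) := (hGconv i _).ordConnected.out (hxG i a) hc ⟨hab, hbc⟩
    exact Set.disjoint_left.1 (hGdisj i hne) (hxG i b) hb
  have hfinj : ∀ a b, (∀ i, f i a = f i b) → a = b := by
    intro a b h
    by_contra hne
    have hPP : P a = P b := by
      rw [hP a, hP b]
      simp only [h]
    exact Set.disjoint_left.1 (hPdisj hne) (hx a) (hPP ▸ hx a)
  have hxinj : Function.Injective x := by
    intro a b h
    by_contra hne
    exact Set.disjoint_left.1 (hPdisj hne) (hx a) (h ▸ hx b)
  rcases Nat.eq_zero_or_pos m with rfl | hm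
  · exact Nat.zero_le _
  obtain ⟨M, -, hM⟩ := Finset.exists_max_image (Finset.univ : Finset (Fin m)) x
    ⟨⟨0, hm⟩, Finset.mem_univ _⟩
  -- every non-maximal point is the last one of its class for some `i`
  have key : ∀ j : {j : Fin m // j ≠ M}, ∃ i, ∀ c, x j < x c → f i c ≠ f i j := by
    rintro ⟨j, hj⟩
    have hlt : x j < x M :=
      lt_of_le_of_ne (hM j (Finset.mem_univ _)) (fun h => hj (hxinj h))
    obtain ⟨b, hb, hbmin⟩ := Finset.exists_min_image
      (Finset.univ.filter fun c => x j < x c) x ⟨M, by simpa using hlt⟩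
    have hjb : x j < x b := by simpa using hb
    have hne : ∃ i, f i b ≠ f i j := by
      by_contra hcon
      push Not at hcon
      have := hfinj b j hcon
      rw [this] at hjb
      exact lt_irrefl _ hjb
    obtain ⟨i, hi⟩ := hne
    refine ⟨i, fun c hc hcj => hi ?_⟩
    exact hmid i j b c hjb.le (hbmin c (by simpa using hc)) hcj
  choose g hg using key
  have hcard : (Finset.univ : Finset {j : Fin m // j ≠ M}).card ≤
      (Finset.univ.sigma fun i : Fin n => Finset.univ.erase (f i M)).card := by
    apply Finset.card_le_card_of_injOn (fun j => (⟨g j, f (g j) j⟩ : Σ _ : Fin n, Fin n))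
    · intro j _
      have hlt : x j < x M :=
        lt_of_le_of_ne (hM j (Finset.mem_univ _)) (fun h => j.2 (hxinj h))
      simpa using (hg j M hlt).symm
    · intro a _ b _ hab
      simp only [Sigma.mk.injEq, heq_eq_eq] at hab
      obtain ⟨h1, h2⟩ := hab
      rcases lt_trichotomy (x a) (x b) with h | h | h
      · exact absurd (by rw [h2, h1]) (hg a b h)
      · exact Subtype.ext (hxinj h)
      · exact absurd (by rw [← h2, h1]) (hg b a h)
  simp [Finset.card_sigma, Finset.card_erase_of_mem, Fintype.card_subtype_compl] at hcard
  have : n * (n - 1) = n ^ 2 - n := by rw [Nat.mul_sub, sq, mul_one]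
  omega
end

section
/- Suppose |ζ_b[s,θ] − P(s,θ|b)| ≤ ν for all b ∈ B, s ∈ S, θ ∈ Θ, and |Λ_i(b_i,b'_i) − C_i(b_i,b'_i)| ≤ χ for all agents i and b_i, b'_i ∈ B_i. Let (x*, y*, μ*, z*) be an optimal solution to LP(P, C, 0). Then (x*, y*, μ*, z'), where z'_i[b_i,b'_i,s_i] := z*_i[b_i,b'_i,s_i] + M·|S_{−i}|·m·ν (with S_{−i} := ∏_{j≠i} S_j and m = |Θ|), is a feasible solution of LP(ζ, Λ, 2M·|S|·m·ν + χ). -/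
open Finset

noncomputable section

variable {n : ℕ} {B S : Fin n → Type*} {Θ A : Type*}

/-- Perturbation bound for `fLP`. -/
theorem fLP_diff_le
    [∀ i, Fintype (B i)] [∀ i, DecidableEq (B i)]
    [∀ i, Fintype (S i)] [∀ i, DecidableEq (S i)] [Fintype Θ]
    (M : ℝ) (hM : 0 < M)
    (P ζ : (∀ j, B j) → (∀ j, S j) → Θ → ℝ) (ν : ℝ) (hν0 : 0 ≤ ν)
    (hν : ∀ b s θ, |ζ b s θ - P b s θ| ≤ ν)
    (i : Fin n) (x : (∀ j, B j) → (∀ j, S j) → Θ → ℝ) (μ : (∀ j, B j) → ℝ)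
    (hx0 : ∀ b s θ, 0 ≤ x b s θ) (hx : ∀ b s θ, x b s θ ≤ M * μ b)
    (hμ0 : ∀ b, 0 ≤ μ b) (hμ1 : ∑ b, μ b = 1)
    (bi bi' : B i) (si si' : S i) :
    |fLP i x bi bi' si si' ζ - fLP i x bi bi' si si' P| ≤
      M * (∏ j ∈ Finset.univ.erase i, (Fintype.card (S j) : ℝ)) *
          (Fintype.card Θ) * ν := by
  have hcard : ((Finset.univ.filter (fun s : ∀ j, S j => s i = si)).card : ℝ)
      = ∏ j ∈ Finset.univ.erase i, (Fintype.card (S j) : ℝ) := by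
    have h := Fintype.card_filter_piFinset_eq_of_mem
      (fun j => (Finset.univ : Finset (S j))) i (Finset.mem_univ si)
    rw [Fintype.piFinset_univ] at h
    rw [h]
    push_cast
    rfl
  have hμsum : ∑ b ∈ Finset.univ.filter (fun b : ∀ j, B j => b i = bi'),
      μ (Function.update b i bi) ≤ 1 := by
    rw [← hμ1, ← Finset.sum_image (f := μ) (g := fun b => Function.update b i bi)]
    · exact Finset.sum_le_sum_of_subset_of_nonneg (Finset.subset_univ _) (fun b _ _ => hμ0 b)
    · intro b hb b' hb' h
      simp only [Finset.coe_filter, Finset.mem_univ, true_and, Set.mem_ofPred_eq] at hb hb'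
      funext j
      by_cases hj : j = i
      · subst hj; rw [hb, hb']
      · have := congrFun h j
        simpa [Function.update_of_ne hj] using this
  have hstep : |fLP i x bi bi' si si' ζ - fLP i x bi bi' si si' P| ≤
      ∑ b : (∀ j, B j), ∑ s : (∀ j, S j), ∑ _θ : Θ, if b i = bi' ∧ s i = si then
        M * μ (Function.update b i bi) * ν else 0 := by
    unfold fLP
    simp only [← Finset.sum_sub_distrib]
    refine (Finset.abs_sum_le_sum_abs _ _).trans (Finset.sum_le_sum fun b _ => ?_)
    refine (Finset.abs_sum_le_sum_abs _ _).trans (Finset.sum_le_sum fun s _ => ?_)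
    refine (Finset.abs_sum_le_sum_abs _ _).trans (Finset.sum_le_sum fun θ _ => ?_)
    split_ifs
    · rw [← mul_sub, abs_mul, abs_of_nonneg (hx0 _ _ _)]
      exact mul_le_mul (hx _ _ _) (hν _ _ _) (abs_nonneg _)
        (mul_nonneg hM.le (hμ0 _))
    · simp
  refine hstep.trans ?_
  have heq : (∑ b : (∀ j, B j), ∑ s : (∀ j, S j), ∑ _θ : Θ, if b i = bi' ∧ s i = si then
        M * μ (Function.update b i bi) * ν else 0)
      = (∑ b ∈ Finset.univ.filter (fun b : ∀ j, B j => b i = bi'),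
          μ (Function.update b i bi)) *
        (M * (∏ j ∈ Finset.univ.erase i, (Fintype.card (S j) : ℝ)) *
          (Fintype.card Θ) * ν) := by
    rw [← hcard, Finset.sum_mul, Finset.sum_filter]
    refine Finset.sum_congr rfl fun b _ => ?_
    by_cases hb : b i = bi'
    · simp only [hb, true_and, if_true, Finset.sum_const, Finset.card_univ, nsmul_eq_mul]
      rw [← Finset.mul_sum, ← Finset.sum_filter, Finset.sum_const, nsmul_eq_mul]
      ring
    · simp [hb]
  rw [heq]
  refine mul_le_of_le_one_left ?_ hμsum
  have : (0:ℝ) ≤ ∏ j ∈ Finset.univ.erase i, (Fintype.card (S j) : ℝ) :=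
    Finset.prod_nonneg fun _ _ => Nat.cast_nonneg _
  positivity

/-- an optimal solution of `LP(P, C, 0)`, with suitably enlarged auxiliary
variables `z`, is feasible for the estimated LP `LP(ζ, Λ, 2M|S|mν + χ)`. -/
theorem optimal_LP_solution_feasible_for_estimated_LP
    [∀ i, Fintype (B i)] [∀ i, DecidableEq (B i)]
    [∀ i, Fintype (S i)] [∀ i, DecidableEq (S i)]
    [Fintype Θ] [Fintype A]
    (c : ∀ i, B i → ℝ)
    (P : (∀ i, B i) → (∀ i, S i) → Θ → ℝ)
    (u : A → Θ → ℝ) (M : ℝ) (hM : 0 < M)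
    (hc : ∀ i bi, c i bi ∈ Set.Icc (0:ℝ) 1)
    (hu : ∀ a θ, u a θ ∈ Set.Icc (0:ℝ) 1)
    (hP0 : ∀ b s θ, 0 ≤ P b s θ)
    (hP1 : ∀ b, (∑ s, ∑ θ, P b s θ) = 1)
    (ζ : (∀ j, B j) → (∀ j, S j) → Θ → ℝ)
    (hζ0 : ∀ b s θ, 0 ≤ ζ b s θ)
    (hζ1 : ∀ b, (∑ s, ∑ θ, ζ b s θ) = 1)
    (Λ : ∀ i, B i → B i → ℝ)
    (hΛrange : ∀ i (bi bi' : B i), Λ i bi bi' ∈ Set.Icc (-1:ℝ) 1)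
    (ν χ : ℝ) (hν0 : 0 ≤ ν) (hχ0 : 0 ≤ χ)
    (hν : ∀ b s θ, |ζ b s θ - P b s θ| ≤ ν)
    (hχ : ∀ i (bi bi' : B i), |Λ i bi bi' - (c i bi - c i bi')| ≤ χ)
    (xs : Fin n → (∀ j, B j) → (∀ j, S j) → Θ → ℝ)
    (ys : (∀ j, B j) → (∀ j, S j) → A → ℝ)
    (zs : ∀ i, B i → B i → S i → ℝ)
    (μs : (∀ j, B j) → ℝ)
    (hfeas : LPfeasible M P (fun i bi bi' => c i bi - c i bi') 0 xs ys zs μs)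
    (hopt : ∀ x y z μ,
      LPfeasible M P (fun i bi bi' => c i bi - c i bi') 0 x y z μ →
      LPobj u P x y ≤ LPobj u P xs ys) :
    LPfeasible M ζ Λ
      (2 * M * (Fintype.card (∀ j, S j)) * (Fintype.card Θ) * ν + χ)
      xs ys
      (fun i bi bi' si => zs i bi bi' si +
        M * (∏ j ∈ Finset.univ.erase i, (Fintype.card (S j) : ℝ)) *
          (Fintype.card Θ) * ν)
      μs := by
  obtain ⟨hx0, hy0, hz0, hμ0, hμ1, h1, h2, h3, h4⟩ := hfeas
  have key := fun i (bi bi' : B i) si si' =>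
    abs_le.mp (fLP_diff_le M hM P ζ ν hν0 hν i (xs i) μs (hx0 i) (h4 i) hμ0 hμ1 bi bi' si si')
  refine ⟨hx0, hy0, ?_, hμ0, hμ1, ?_, ?_, h3, h4⟩
  · intro i bi bi' si
    have : (0:ℝ) ≤ ∏ j ∈ Finset.univ.erase i, (Fintype.card (S j) : ℝ) :=
      Finset.prod_nonneg fun _ _ => Nat.cast_nonneg _
    have := hz0 i bi bi' si
    positivity
  · intro i bi bi'
    have hcardS : (Fintype.card (∀ j, S j) : ℝ)
        = Fintype.card (S i) * ∏ j ∈ Finset.univ.erase i, (Fintype.card (S j) : ℝ) := by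
      rw [Fintype.card_pi, Finset.mul_prod_erase Finset.univ
        (fun j => (Fintype.card (S j) : ℝ)) (Finset.mem_univ i)]
      push_cast
      rfl
    have hlow : ∑ si, (fLP i (xs i) bi bi si si P - zs i bi bi' si
          - 2 * (M * (∏ j ∈ Finset.univ.erase i, (Fintype.card (S j) : ℝ)) *
          (Fintype.card Θ) * ν)) ≤
        ∑ si, (fLP i (xs i) bi bi si si ζ - (zs i bi bi' si +
          M * (∏ j ∈ Finset.univ.erase i, (Fintype.card (S j) : ℝ)) *
          (Fintype.card Θ) * ν)) := by
      refine Finset.sum_le_sum fun si _ => ?_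
      have := (key i bi bi si si).1
      linarith
    rw [Finset.sum_sub_distrib, Finset.sum_const, Finset.card_univ, nsmul_eq_mul] at hlow
    have hcost : (∑ b, if b i = bi then μs b * Λ i bi bi' else 0) ≤
        (∑ b, if b i = bi then μs b * (c i bi - c i bi') else 0) + χ := by
      have : χ = ∑ b, μs b * χ := by rw [← Finset.sum_mul, hμ1, one_mul]
      rw [this, ← Finset.sum_add_distrib]
      refine Finset.sum_le_sum fun b _ => ?_
      split_ifs
      · rw [← mul_add]
        refine mul_le_mul_of_nonneg_left ?_ (hμ0 b)
        have := (abs_le.mp (hχ i bi bi')).2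
        linarith
      · have := mul_nonneg (hμ0 b) hχ0
        linarith
    have h := h1 i bi bi'
    simp only at h
    rw [hcardS]
    show _ ≤ _
    refine le_trans ?_ hlow
    linarith
  · intro i bi bi' si si'
    have := (key i bi bi' si si').2
    have := h2 i bi bi' si si'
    show _ ≤ _
    linarith
end
end

section
/- Suppose |ζ_b[s,θ] − P(s,θ|b)| ≤ ν for all b, s, θ, and |Λ_i(b_i,b'_i) − C_i(b_i,b'_i)| ≤ χ for all i, b_i, b'_i. Let (x, y, μ, z) be a feasible solution to LP(ζ, Λ, ε) with ε = 2M·|S|·m·ν + χ, and let (μ, γ, π) be the mechanism obtained from it by γ_i[b,s,θ] := x_i[b,s,θ]/μ[b] and π[b,s,a] := y[b,s,a]/μ[b] when μ[b] ≠ 0 (and γ_i := 0, π := uniform when μ[b] = 0). Then for every agent i and every deviation (φ,ψ): F_i(μ,γ) − F_i^{φ,ψ}(μ,γ) ≥ Σ_b μ[b]·C_i(b_i,φ(b_i)) − (2M·|S|·m·(k+1)·ν + (k+1)·χ). -/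
open Finset

noncomputable section

variable {n : ℕ} {B S : Fin n → Type*} {Θ A : Type*}

lemma aux_reindex [∀ i, Fintype (B i)] [∀ i, DecidableEq (B i)] (i : Fin n) (v w : B i)
    (g : (∀ j, B j) → ℝ) :
    (∑ b : (∀ j, B j), if b i = v then g b else 0) =
      ∑ b : (∀ j, B j), if b i = w then g (Function.update b i v) else 0 := by
  rw [← Finset.sum_filter, ← Finset.sum_filter]
  refine Finset.sum_bij' (fun b _ => Function.update b i w) (fun b _ => Function.update b i v)
    ?_ ?_ ?_ ?_ ?_
  · intro b hb; simp
  · intro b hb; simp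
  · intro b hb
    have h : b i = v := by simpa using hb
    subst h; simp
  · intro b hb
    have h : b i = w := by simpa using hb
    subst h; simp
  · intro b hb
    have h : b i = v := by simpa using hb
    subst h; simp

lemma aux_sum_fLP [∀ i, Fintype (B i)] [∀ i, DecidableEq (B i)]
    [∀ i, Fintype (S i)] [∀ i, DecidableEq (S i)] [Fintype Θ]
    (i : Fin n) (X ζ : (∀ j, B j) → (∀ j, S j) → Θ → ℝ)
    (φ : B i → B i) (ψ : B i → S i → S i) :
    (∑ bi, ∑ si, fLP i X bi (φ bi) si (ψ bi si) ζ) =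
      ∑ b, ∑ s, ∑ θ, X b (Function.update s i (ψ (b i) (s i))) θ *
        ζ (Function.update b i (φ (b i))) s θ := by
  have h1 : ∀ bi, (∑ si, fLP i X bi (φ bi) si (ψ bi si) ζ) =
      ∑ b : (∀ j, B j), if b i = bi then
        ∑ s, ∑ θ, X b (Function.update s i (ψ (b i) (s i))) θ *
          ζ (Function.update b i (φ (b i))) s θ else 0 := by
    intro bi
    rw [aux_reindex i bi (φ bi)]
    unfold fLP
    rw [Finset.sum_comm]
    refine Finset.sum_congr rfl fun b _ => ?_
    rw [Finset.sum_comm]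
    split_ifs with h
    · refine Finset.sum_congr rfl fun s _ => ?_
      rw [Finset.sum_comm]
      refine Finset.sum_congr rfl fun θ _ => ?_
      rw [Finset.sum_eq_single (s i)]
      · rw [if_pos ⟨h, rfl⟩]
        simp [← h]
      · intro si _ hne
        rw [if_neg]
        rintro ⟨_, h2⟩
        exact hne h2.symm
      · simp
    · simp [h]
  simp_rw [h1]
  rw [Finset.sum_comm]
  simp

lemma aux_diff [∀ i, Fintype (B i)] [∀ i, Fintype (S i)] [Fintype Θ]
    (M ν : ℝ) (μ : (∀ j, B j) → ℝ) (hμ : ∑ b, μ b = 1)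
    (Y Q R : (∀ j, B j) → (∀ j, S j) → Θ → ℝ)
    (hY0 : ∀ b s θ, 0 ≤ Y b s θ) (hY : ∀ b s θ, Y b s θ ≤ M * μ b) (hν0 : 0 ≤ ν)
    (hQR : ∀ b s θ, Q b s θ - R b s θ ≤ ν) :
    (∑ b, ∑ s, ∑ θ, Y b s θ * Q b s θ) - (∑ b, ∑ s, ∑ θ, Y b s θ * R b s θ) ≤
      M * (Fintype.card (∀ j, S j)) * (Fintype.card Θ) * ν := by
  have h : (∑ b, ∑ s : (∀ j, S j), ∑ _θ : Θ, M * μ b * ν) =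
      M * (Fintype.card (∀ j, S j)) * (Fintype.card Θ) * ν := by
    simp only [Finset.sum_const, Finset.card_univ, nsmul_eq_mul]
    rw [← Finset.mul_sum, ← Finset.mul_sum, ← Finset.sum_mul, ← Finset.mul_sum, hμ]
    ring
  rw [← h]
  simp only [← Finset.sum_sub_distrib]
  refine Finset.sum_le_sum fun b _ => Finset.sum_le_sum fun s _ => Finset.sum_le_sum fun θ _ => ?_
  have h1 := mul_le_mul_of_nonneg_left (hQR b s θ) (hY0 b s θ)
  have h2 := mul_le_mul_of_nonneg_right (hY b s θ) hν0
  linarith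

/-- the mechanism recovered from a feasible solution of the estimated LP
`LP(ζ, Λ, 2M|S|mν + χ)` is approximately incentive compatible. -/
theorem mechanism_from_estimated_LP_approx_IC
    [∀ i, Fintype (B i)] [∀ i, DecidableEq (B i)]
    [∀ i, Fintype (S i)] [∀ i, DecidableEq (S i)]
    [Fintype Θ] [Fintype A] [Nonempty A]
    (c : ∀ i, B i → ℝ)
    (P : (∀ i, B i) → (∀ i, S i) → Θ → ℝ)
    (u : A → Θ → ℝ) (M : ℝ) (hM : 0 < M)
    (hc : ∀ i bi, c i bi ∈ Set.Icc (0:ℝ) 1)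
    (hu : ∀ a θ, u a θ ∈ Set.Icc (0:ℝ) 1)
    (hP0 : ∀ b s θ, 0 ≤ P b s θ)
    (hP1 : ∀ b, (∑ s, ∑ θ, P b s θ) = 1)
    (k : ℕ) (hk : ∀ i, Fintype.card (B i) = k)
    (ζ : (∀ j, B j) → (∀ j, S j) → Θ → ℝ)
    (hζ0 : ∀ b s θ, 0 ≤ ζ b s θ)
    (hζ1 : ∀ b, (∑ s, ∑ θ, ζ b s θ) = 1)
    (Λ : ∀ i, B i → B i → ℝ)
    (hΛrange : ∀ i (bi bi' : B i), Λ i bi bi' ∈ Set.Icc (-1:ℝ) 1)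
    (ν χ : ℝ) (hν0 : 0 ≤ ν) (hχ0 : 0 ≤ χ)
    (hν : ∀ b s θ, |ζ b s θ - P b s θ| ≤ ν)
    (hχ : ∀ i (bi bi' : B i), |Λ i bi bi' - (c i bi - c i bi')| ≤ χ)
    (x : Fin n → (∀ j, B j) → (∀ j, S j) → Θ → ℝ)
    (y : (∀ j, B j) → (∀ j, S j) → A → ℝ)
    (z : ∀ i, B i → B i → S i → ℝ)
    (μ : (∀ j, B j) → ℝ)
    (hfeas : LPfeasible M ζ Λ
      (2 * M * (Fintype.card (∀ j, S j)) * (Fintype.card Θ) * ν + χ) x y z μ)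
    (γ : Fin n → (∀ j, B j) → (∀ j, S j) → Θ → ℝ)
    (π : (∀ j, B j) → (∀ j, S j) → A → ℝ)
    (hγ : ∀ i b s θ, γ i b s θ = if μ b = 0 then 0 else x i b s θ / μ b)
    (hπ : ∀ b s a, π b s a =
      if μ b = 0 then (1 : ℝ) / (Fintype.card A) else y b s a / μ b) :
    ∀ (i : Fin n) (φ : B i → B i) (ψ : B i → S i → S i),
      Fpay P μ γ i - FpayDev P μ γ i φ ψ ≥
        (∑ b, μ b * (c i (b i) - c i (φ (b i)))) -
          (2 * M * (Fintype.card (∀ j, S j)) * (Fintype.card Θ) * (k + 1) * ν +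
            (k + 1) * χ) := by
  intro i φ ψ
  obtain ⟨hx0, -, -, hμ0, hμ1, hcon, hz, -, hxM⟩ := hfeas
  have hxg : ∀ b s θ, μ b * γ i b s θ = x i b s θ := by
    intro b s θ
    rw [hγ]
    split_ifs with h
    · have h1 := hxM i b s θ
      have h2 := hx0 i b s θ
      rw [h] at h1
      linarith
    · field_simp
  have hF : Fpay P μ γ i = ∑ b, ∑ s, ∑ θ, x i b s θ * P b s θ := by
    unfold Fpay
    refine Finset.sum_congr rfl fun b _ => Finset.sum_congr rfl fun s _ =>
      Finset.sum_congr rfl fun θ _ => ?_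
    rw [← hxg]; ring
  have hD : FpayDev P μ γ i φ ψ = ∑ b, ∑ s, ∑ θ,
      x i b (Function.update s i (ψ (b i) (s i))) θ *
        P (Function.update b i (φ (b i))) s θ := by
    unfold FpayDev
    refine Finset.sum_congr rfl fun b _ => Finset.sum_congr rfl fun s _ =>
      Finset.sum_congr rfl fun θ _ => ?_
    rw [← hxg]; ring
  have e1 := aux_diff M ν μ hμ1 (x i) ζ P (hx0 i) (hxM i) hν0
    (fun b s θ => (abs_le.mp (hν b s θ)).2)
  have e2 := aux_diff M ν μ hμ1
    (fun b s θ => x i b (Function.update s i (ψ (b i) (s i))) θ)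
    (fun b s θ => P (Function.update b i (φ (b i))) s θ)
    (fun b s θ => ζ (Function.update b i (φ (b i))) s θ)
    (fun b s θ => hx0 i _ _ _) (fun b s θ => hxM i _ _ _) hν0
    (fun b s θ => by have := (abs_le.mp (hν (Function.update b i (φ (b i))) s θ)).1; linarith)
  have g1 := aux_sum_fLP i (x i) ζ (fun b => b) (fun _ s => s)
  have g2 := aux_sum_fLP i (x i) ζ φ ψ
  simp only [Function.update_eq_self] at g1
  set ε := 2 * M * (Fintype.card (∀ j, S j)) * (Fintype.card Θ) * ν + χ with hε
  have hmain : (∑ bi, ∑ si, fLP i (x i) bi bi si si ζ) -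
      (∑ bi, ∑ si, fLP i (x i) bi (φ bi) si (ψ bi si) ζ) ≥
      (∑ b, μ b * Λ i (b i) (φ (b i))) - k * ε := by
    have hs : (∑ b, μ b * Λ i (b i) (φ (b i))) - k * ε =
        ∑ bi, ((∑ b : (∀ j, B j), if b i = bi then μ b * Λ i bi (φ bi) else 0) - ε) := by
      rw [Finset.sum_sub_distrib, Finset.sum_comm]
      simp [hk i]
    rw [hs, ← Finset.sum_sub_distrib]
    refine Finset.sum_le_sum fun bi _ => ?_
    refine le_trans (hcon i bi (φ bi)) ?_
    rw [← Finset.sum_sub_distrib]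
    refine Finset.sum_le_sum fun si _ => ?_
    have := hz i bi (φ bi) si (ψ bi si)
    linarith
  have hC : (∑ b, μ b * (c i (b i) - c i (φ (b i)))) - χ ≤ ∑ b, μ b * Λ i (b i) (φ (b i)) := by
    have : (∑ b, μ b * (c i (b i) - c i (φ (b i)))) - χ =
        ∑ b, μ b * ((c i (b i) - c i (φ (b i))) - χ) := by
      simp only [mul_sub _ _ χ, Finset.sum_sub_distrib, ← Finset.sum_mul, hμ1, one_mul]
    rw [this]
    refine Finset.sum_le_sum fun b _ => mul_le_mul_of_nonneg_left ?_ (hμ0 b)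
    have := (abs_le.mp (hχ i (b i) (φ (b i)))).1
    linarith
  rw [hF, hD]
  rw [g1, g2] at hmain
  rw [hε] at hmain
  linarith
end
end

section
/- Let Θ be a finite set, let q, ξ, ξ' ∈ Δ(Θ) and ϱ ≥ 0 with |q[θ] − ξ[θ]| ≤ ϱ for all θ ∈ Θ. For any constant H ∈ ℝ define the quadratic scoring payments ĝ[θ] := ξ[θ] + H − (1/2)·||ξ||₂² and ĝ'[θ] := ξ'[θ] + H − (1/2)·||ξ'||₂². Then Σ_θ q[θ]·(ĝ[θ] − ĝ'[θ]) ≥ (1/2)·||ξ − ξ'||₂² − 2ϱ. -/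
open Finset

/-- quadratic scoring payments built from an estimated posterior `ξ`
that is `ϱ`-close to the true posterior `q` separate `ξ` from any other estimated
posterior `ξ'` up to `2ϱ`. -/
theorem quadratic_scoring_separation
    {Θ : Type*} [Fintype Θ]
    (q ξ ξ' : Θ → ℝ)
    (hq0 : ∀ θ, 0 ≤ q θ) (hq1 : (∑ θ, q θ) = 1)
    (hξ0 : ∀ θ, 0 ≤ ξ θ) (hξ1 : (∑ θ, ξ θ) = 1)
    (hξ'0 : ∀ θ, 0 ≤ ξ' θ) (hξ'1 : (∑ θ, ξ' θ) = 1)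
    (ϱ : ℝ) (hϱ0 : 0 ≤ ϱ)
    (hclose : ∀ θ, |q θ - ξ θ| ≤ ϱ)
    (H : ℝ) :
    ∑ θ, q θ *
        ((ξ θ + H - (1/2) * ∑ θ', (ξ θ')^2) - (ξ' θ + H - (1/2) * ∑ θ', (ξ' θ')^2)) ≥
      (1/2) * (∑ θ, (ξ θ - ξ' θ)^2) - 2 * ϱ := by
  have h1 : ∑ θ, (-(ϱ * (ξ θ + ξ' θ))) ≤ ∑ θ, (q θ - ξ θ) * (ξ θ - ξ' θ) := by
    apply Finset.sum_le_sum
    intro θ _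
    obtain ⟨h2, h3⟩ := abs_le.mp (hclose θ)
    nlinarith [mul_nonneg (sub_nonneg.2 h2) (hξ0 θ), mul_nonneg (sub_nonneg.2 h3) (hξ'0 θ)]
  have h2 : ∑ θ, (-(ϱ * (ξ θ + ξ' θ))) = -(2 * ϱ) := by
    rw [Finset.sum_neg_distrib, ← Finset.mul_sum, Finset.sum_add_distrib, hξ1, hξ'1]
    ring
  generalize hA : ∑ θ', (ξ θ')^2 = A
  generalize hB : ∑ θ', (ξ' θ')^2 = B
  have h3 : ∑ θ, q θ * ((ξ θ + H - (1/2) * A) - (ξ' θ + H - (1/2) * B))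
      = ∑ θ, q θ * (ξ θ - ξ' θ) + (1/2) * (B - A) := by
    have : (1/2) * (B - A) = ∑ θ, q θ * ((1/2) * (B - A)) := by
      rw [← Finset.sum_mul, hq1, one_mul]
    rw [this, ← Finset.sum_add_distrib]
    exact Finset.sum_congr rfl fun θ _ => by ring
  have h4 : ∑ θ, q θ * (ξ θ - ξ' θ) + (1/2) * (B - A) - (1/2) * (∑ θ, (ξ θ - ξ' θ)^2)
      = ∑ θ, (q θ - ξ θ) * (ξ θ - ξ' θ) := by
    rw [← hA, ← hB, ← Finset.sum_sub_distrib, Finset.mul_sum, Finset.mul_sum,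
      ← Finset.sum_add_distrib, ← Finset.sum_sub_distrib]
    exact Finset.sum_congr rfl fun θ _ => by ring
  rw [h3]
  linarith
end

section
/- Let Θ be a finite set with m := |Θ| ≥ 1, let q, ξ, ξ' ∈ Δ(Θ) and ϱ ≥ 0 with |q[θ] − ξ[θ]| ≤ ϱ for all θ ∈ Θ, and suppose ||ξ − ξ'||₂² ≥ 13·m·ϱ. For any constant H ∈ ℝ define ĝ[θ] := ξ[θ] + H − (1/2)·||ξ||₂² and ĝ'[θ] := ξ'[θ] + H − (1/2)·||ξ'||₂². Then Σ_θ q[θ]·(ĝ[θ] − ĝ'[θ]) ≥ (9/26)·||ξ − ξ'||₂²; in particular the quadratic scoring rule strictly incentivizes reporting the signal whose estimated posterior is ξ. -/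
open Finset

/-- if the estimated posteriors are well separated
(`‖ξ − ξ'‖₂² ≥ 13·m·ϱ`), the quadratic scoring rule strictly incentivizes reporting
the signal with estimated posterior `ξ`, with margin `(9/26)·‖ξ − ξ'‖₂²`. -/
theorem quadratic_scoring_strict_incentive
    {Θ : Type*} [Fintype Θ]
    (hm : 1 ≤ Fintype.card Θ)
    (q ξ ξ' : Θ → ℝ)
    (hq0 : ∀ θ, 0 ≤ q θ) (hq1 : (∑ θ, q θ) = 1)
    (hξ0 : ∀ θ, 0 ≤ ξ θ) (hξ1 : (∑ θ, ξ θ) = 1)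
    (hξ'0 : ∀ θ, 0 ≤ ξ' θ) (hξ'1 : (∑ θ, ξ' θ) = 1)
    (ϱ : ℝ) (hϱ0 : 0 ≤ ϱ)
    (hclose : ∀ θ, |q θ - ξ θ| ≤ ϱ)
    (hsep : (∑ θ, (ξ θ - ξ' θ)^2) ≥ 13 * (Fintype.card Θ) * ϱ)
    (H : ℝ) :
    ∑ θ, q θ *
        ((ξ θ + H - (1/2) * ∑ θ', (ξ θ')^2) - (ξ' θ + H - (1/2) * ∑ θ', (ξ' θ')^2)) ≥
      (9/26) * ∑ θ, (ξ θ - ξ' θ)^2 := by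
  have hξle : ∀ θ, ξ θ ≤ 1 := fun θ => by
    rw [← hξ1]; exact Finset.single_le_sum (fun i _ => hξ0 i) (Finset.mem_univ θ)
  have hξ'le : ∀ θ, ξ' θ ≤ 1 := fun θ => by
    rw [← hξ'1]; exact Finset.single_le_sum (fun i _ => hξ'0 i) (Finset.mem_univ θ)
  have key : ∀ θ, (1/2) * (ξ θ)^2 - (1/2) * (ξ' θ)^2 + (1/2) * (ξ θ - ξ' θ)^2 - ϱ
      ≤ q θ * (ξ θ - ξ' θ) := fun θ => by
    have h1 : |ξ θ - ξ' θ| ≤ 1 := by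
      rw [abs_le]
      constructor <;> linarith [hξ0 θ, hξ'0 θ, hξle θ, hξ'le θ]
    have h2 : |(q θ - ξ θ) * (ξ θ - ξ' θ)| ≤ ϱ * 1 := by
      rw [abs_mul]
      exact mul_le_mul (hclose θ) h1 (abs_nonneg _) hϱ0
    have h3 := (abs_le.mp h2).1
    nlinarith
  have hsum := Finset.sum_le_sum (s := Finset.univ) (fun θ _ => key θ)
  simp only [Finset.sum_sub_distrib, Finset.sum_add_distrib, ← Finset.mul_sum,
    Finset.sum_const, Finset.card_univ, nsmul_eq_mul] at hsum
  have hD : 0 ≤ ∑ θ, (ξ θ - ξ' θ)^2 := Finset.sum_nonneg fun θ _ => sq_nonneg _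
  generalize hA : ∑ θ, (ξ θ)^2 = A at *
  generalize hB : ∑ θ, (ξ' θ)^2 = B at *
  have e : ∑ θ, q θ * ((ξ θ + H - (1/2) * A) - (ξ' θ + H - (1/2) * B))
      = ∑ θ, q θ * (ξ θ - ξ' θ) - (1/2) * A + (1/2) * B := by
    have : ∀ θ, q θ * ((ξ θ + H - (1/2) * A) - (ξ' θ + H - (1/2) * B))
      = q θ * (ξ θ - ξ' θ) + q θ * ((1/2) * B - (1/2) * A) := fun θ => by ring
    simp only [this]
    rw [Finset.sum_add_distrib, ← Finset.sum_mul, hq1]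
    ring
  rw [e]
  linarith
end
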